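/- arXiv:1903.10656 — 5 statements merged into one kernel-verified Lean document; each statement's English description precedes it below -/
import Mathlib

section
/- Let φ ∈ 𝒮(ℝ^d) and h > 0. For every Schwartz function f ∈ 𝒮(ℝ^d) and every ζ ∈ h⁻¹𝕋^d, Q_h f(ζ) = ∑_{n∈ℤ^d} conj(φ̂(hζ + n)) f(ζ + h⁻¹ n), where Q_h = F_h P_h 𝓕*. Concretely: h^d ∑_{z∈hℤ^d} e^{−2πi z·ζ} ( h^{−d} ∫_{ℝ^d} conj(φ(h⁻¹(x−z))) (∫_{ℝ^d} e^{2πi x·ξ} f(ξ) dξ) dx ) = ∑_{n∈ℤ^d} conj(φ̂(hζ + n)) f(ζ + h⁻¹ n). -/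
open MeasureTheory Complex Real
open scoped FourierTransform InnerProductSpace ComplexConjugate

noncomputable section

abbrev Euc (d : ℕ) : Type := EuclideanSpace ℝ (Fin d)
abbrev Zd (d : ℕ) : Type := Fin d → ℤ

/-- The lattice point `hz ∈ ℝ^d` associated to `z ∈ ℤ^d`. -/
def latPt (d : ℕ) (h : ℝ) (z : Zd d) : Euc d :=
  (EuclideanSpace.equiv (Fin d) ℝ).symm fun j => h * (z j : ℝ)

/-- The vector in `ℝ^d` associated to `n ∈ ℤ^d`. -/
def latVec (d : ℕ) (n : Zd d) : Euc d :=
  (EuclideanSpace.equiv (Fin d) ℝ).symm fun j => (n j : ℝ)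

/-- integer vector in the sup-norm space -/
def zv {d : ℕ} (n : Fin d → ℤ) : Fin d → ℝ := fun i => (n i : ℝ)

lemma summable_lat (d : ℕ) :
    Summable fun n : Fin d → ℤ => ((1 + ‖zv n‖) ^ (d + 1))⁻¹ := by
  classical
  let L : Submodule ℤ (Fin d → ℝ) := Submodule.span ℤ (Set.range (Pi.basisFun ℝ (Fin d)))
  have hfin : Module.finrank ℤ L < d + 1 := by
    have := ZLattice.rank ℝ L
    rw [this]; simp
  have hmem : ∀ n : Fin d → ℤ, zv n ∈ L := by
    intro n
    rw [Module.Basis.mem_span_iff_repr_mem]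
    intro i
    exact ⟨n i, by simp [zv]⟩
  have h1 := ZLattice.summable_norm_pow_inv L (d + 1) hfin
  let e : (Fin d → ℤ) → L := fun n => ⟨zv n, hmem n⟩
  have he : Function.Injective e := by
    intro a b hab
    have : zv a = zv b := congrArg Subtype.val hab
    funext i
    have := congrFun this i
    simpa [zv] using this
  have h2 := h1.comp_injective he
  have h3 : Summable fun n : Fin d → ℤ => if n = 0 then (1 : ℝ) else 0 :=
    summable_of_hasFiniteSupport (Set.Finite.subset (Set.finite_singleton 0) (by
      intro n; simp))
  refine Summable.of_nonneg_of_le (fun n => by positivity) (fun n => ?_) (h2.add h3)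
  by_cases hn : n = 0
  · subst hn
    have : zv (0 : Fin d → ℤ) = 0 := by ext; simp [zv]
    simp [this, e]
  · have : 0 < ‖zv n‖ := by
      rw [norm_pos_iff]
      intro h
      apply hn
      funext i
      have := congrFun h i
      simpa [zv] using this
    simp only [hn, if_false, add_zero, Function.comp, e, inv_pow]
    change _ ≤ (‖zv n‖ ^ (d + 1))⁻¹
    gcongr
    linarith

def cube {d : ℕ} (n : Fin d → ℤ) : Set (Fin d → ℝ) := {x | ∀ i, x i ∈ Set.Ioc (n i : ℝ) (n i + 1)}

lemma cube_meas {d : ℕ} (n : Fin d → ℤ) : MeasurableSet (cube n) := by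
  have : cube n = Set.univ.pi fun i => Set.Ioc (n i : ℝ) (n i + 1) := by
    ext; simp [cube]
  rw [this]
  exact MeasurableSet.univ_pi fun i => measurableSet_Ioc

lemma cube_disj {d : ℕ} : Pairwise (Function.onFun Disjoint (cube (d := d))) := by
  intro a b hab
  rw [Function.onFun, Set.disjoint_left]
  intro x hx hy
  apply hab
  funext i
  have h1 := hx i
  have h2 := hy i
  have e1 : ⌈x i⌉ = a i + 1 := by
    rw [Int.ceil_eq_iff]; push_cast; constructor <;> linarith [h1.1, h1.2]
  have e2 : ⌈x i⌉ = b i + 1 := by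
    rw [Int.ceil_eq_iff]; push_cast; constructor <;> linarith [h2.1, h2.2]
  omega

lemma cube_union {d : ℕ} : (⋃ n, cube (d := d) n) = Set.univ := by
  rw [Set.eq_univ_iff_forall]
  intro x
  rw [Set.mem_iUnion]
  refine ⟨fun i => ⌈x i⌉ - 1, fun i => ?_⟩
  push_cast
  constructor <;> linarith [Int.ceil_lt_add_one (x i), Int.le_ceil (x i)]

lemma integral_cube {d : ℕ} (F : (Fin d → ℝ) → ℂ) (n : Fin d → ℤ) :
    ∫ x in cube n, F x = ∫ x in cube (0 : Fin d → ℤ), F (x + zv n) := by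
  have := (measurePreserving_add_right (volume : Measure (Fin d → ℝ)) (zv n)).setIntegral_preimage_emb
    (measurableEmbedding_addRight (zv n)) F (cube n)
  rw [← this]
  congr 2
  ext x
  simp only [cube, zv, Set.mem_preimage, Set.mem_ofPred_eq, Pi.add_apply, Set.mem_Ioc, Pi.zero_apply,
    Int.cast_zero]
  refine forall_congr' fun i => ?_
  constructor <;> rintro ⟨h1, h2⟩ <;> constructor <;> linarith

lemma hasSum_cube {d : ℕ} (F : (Fin d → ℝ) → ℂ) (hF : Integrable F) :
    HasSum (fun n : Fin d → ℤ => ∫ x in cube (0 : Fin d → ℤ), F (x + zv n)) (∫ x, F x) := by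
  have := hasSum_integral_iUnion (μ := volume) (f := F) (s := cube (d := d)) cube_meas cube_disj
    hF.integrableOn
  rw [cube_union, setIntegral_univ] at this
  have h2 : (fun n : Fin d → ℤ => ∫ x in cube n, F x) =
      fun n => ∫ x in cube (0 : Fin d → ℤ), F (x + zv n) := funext fun n => integral_cube F n
  rwa [h2] at this

lemma decay_shift {d : ℕ} (x y : Fin d → ℝ) (R : ℝ) (hR : 0 ≤ R) (hx : ‖x‖ ≤ R) (k : ℕ) :
    ((1 + ‖x + y‖) ^ k)⁻¹ ≤ (1 + R) ^ k * ((1 + ‖y‖) ^ k)⁻¹ := by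
  have h1 : ‖y‖ ≤ ‖x + y‖ + R := by
    have : y = (x + y) - x := by abel
    calc ‖y‖ = ‖(x + y) - x‖ := by rw [← this]
      _ ≤ _ := norm_sub_le _ _
      _ ≤ _ := by gcongr
  have h2 : 1 + ‖y‖ ≤ (1 + R) * (1 + ‖x + y‖) := by nlinarith [norm_nonneg (x + y)]
  have h3 : (1 + ‖y‖) ^ k ≤ (1 + R) ^ k * (1 + ‖x + y‖) ^ k := by
    rw [← mul_pow]; gcongr
  rw [inv_le_iff_one_le_mul₀ (by positivity)]
  have : (1 + R) ^ k * ((1 + ‖y‖) ^ k)⁻¹ * (1 + ‖x + y‖) ^ k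
    = ((1 + R) ^ k * (1 + ‖x + y‖) ^ k) / (1 + ‖y‖) ^ k := by field_simp
  rw [this, one_le_div (by positivity)]
  exact h3

lemma poisson_aux {d : ℕ} (g : (Fin d → ℝ) → ℂ) (hg : Continuous g) (C : ℝ)
    (hC : ∀ x, ‖g x‖ ≤ C * ((1 + ‖x‖) ^ (d + 1))⁻¹)
    (hs : Summable fun m : Fin d → ℤ =>
      ∫ x : Fin d → ℝ, UnitAddTorus.mFourier (-m) (fun i => (x i : UnitAddCircle)) * g x) :
    ∑' n : Fin d → ℤ, g (zv n) = ∑' m : Fin d → ℤ,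
      ∫ x : Fin d → ℝ, UnitAddTorus.mFourier (-m) (fun i => (x i : UnitAddCircle)) * g x := by
  have hC0 : 0 ≤ C := by
    have := (norm_nonneg _).trans (hC 0)
    simpa using this
  have hbd : ∀ R : ℝ, 0 ≤ R → ∀ x : Fin d → ℝ, ‖x‖ ≤ R → ∀ n : Fin d → ℤ,
      ‖g (x + zv n)‖ ≤ C * ((1 + R) ^ (d + 1) * ((1 + ‖zv n‖) ^ (d + 1))⁻¹) := by
    intro R hR x hx n
    exact (hC _).trans (by gcongr; exact decay_shift x (zv n) R hR hx (d + 1))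
  have hsumm : ∀ R : ℝ, Summable fun n : Fin d → ℤ =>
      C * ((1 + R) ^ (d + 1) * ((1 + ‖zv n‖) ^ (d + 1))⁻¹) := fun R =>
    ((summable_lat d).mul_left _).mul_left _
  have hF0c : Continuous fun x : Fin d → ℝ => ∑' n : Fin d → ℤ, g (x + zv n) := by
    rw [continuous_iff_continuousAt]
    intro x0
    have : ContinuousOn (fun x : Fin d → ℝ => ∑' n : Fin d → ℤ, g (x + zv n))
        (Metric.ball 0 (‖x0‖ + 1)) := by
      refine continuousOn_tsum (fun n => by fun_prop) (hsumm (‖x0‖ + 1)) ?_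
      intro n x hx
      exact hbd _ (by positivity) x (by rw [mem_ball_zero_iff] at hx; exact hx.le) n
    exact this.continuousAt (Metric.isOpen_ball.mem_nhds (by simp))
  let F0 : C(Fin d → ℝ, ℂ) := ⟨_, hF0c⟩
  let q : C(Fin d → ℝ, UnitAddTorus (Fin d)) :=
    ⟨Pi.map fun _ (t : ℝ) => (t : UnitAddCircle), by
      exact Continuous.piMap fun i => AddCircle.continuous_mk' 1⟩
  have hq : Topology.IsQuotientMap q := by
    apply IsOpenQuotientMap.isQuotientMap
    exact IsOpenQuotientMap.piMap fun i => QuotientAddGroup.isOpenQuotientMap_mk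
  have hfac : Function.FactorsThrough F0 q := by
    intro a b hab
    have h1 : ∀ i, ∃ k : ℤ, b i = a i + k := by
      intro i
      have : (a i : UnitAddCircle) = (b i : UnitAddCircle) := congrFun hab i
      rw [QuotientAddGroup.eq, AddSubgroup.mem_zmultiples_iff] at this
      obtain ⟨k, hk⟩ := this
      exact ⟨k, by simp at hk; linarith⟩
    choose k hk using h1
    have hb : b = a + zv k := by funext i; simp [hk, zv]
    subst hb
    change ∑' n, g (a + zv n) = ∑' n, g (a + zv k + zv n)
    rw [← (Equiv.addLeft k).tsum_eq fun n => g (a + zv n)]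
    congr 1
    funext n
    congr 1
    funext i
    simp [zv, add_assoc]
  let F : C(UnitAddTorus (Fin d), ℂ) := hq.lift F0 hfac
  have hF : ∀ x : Fin d → ℝ, F (fun i => (x i : UnitAddCircle)) = ∑' n, g (x + zv n) := by
    intro x
    exact congrArg (fun f : C(Fin d → ℝ, ℂ) => f x) (hq.lift_comp F0 hfac)
  have hint : Integrable g := by
    have h1 : Integrable fun x : Fin d → ℝ => C * ((1 + ‖x‖) ^ (-((d + 1 : ℕ) : ℝ))) :=
      (integrable_one_add_norm (by simp)).const_mul C
    refine h1.mono' hg.aestronglyMeasurable (Filter.Eventually.of_forall fun x => ?_)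
    rw [Real.rpow_neg (by positivity), Real.rpow_natCast]
    exact hC x
  have hcoef : ∀ m : Fin d → ℤ, UnitAddTorus.mFourierCoeff F m =
      ∫ x : Fin d → ℝ, UnitAddTorus.mFourier (-m) (fun i => (x i : UnitAddCircle)) * g x := by
    intro m
    let e : (Fin d → ℝ) → ℂ := fun x => UnitAddTorus.mFourier (-m) (fun i => (x i : UnitAddCircle))
    have hec : Continuous e := (UnitAddTorus.mFourier (-m)).continuous.comp q.continuous
    have hen : ∀ x, ‖e x‖ ≤ 1 := fun x => by
      have := (UnitAddTorus.mFourier (-m)).norm_coe_le_norm (fun i => (x i : UnitAddCircle))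
      rwa [UnitAddTorus.mFourier_norm] at this
    have hep : ∀ x (n : Fin d → ℤ), e (x + zv n) = e x := by
      intro x n
      simp only [e]
      congr 1
      funext i
      simp only [Pi.add_apply, zv, AddCircle.coe_add]
      have : ((n i : ℝ) : UnitAddCircle) = 0 := by
        rw [AddCircle.coe_eq_zero_iff]; exact ⟨n i, by simp⟩
      rw [this, add_zero]
    have heint : Integrable fun x => e x * g x :=
      hint.bdd_mul hec.aestronglyMeasurable (Filter.Eventually.of_forall hen)
    rw [UnitAddTorus.mFourierCoeff_eq_integral F m 0]
    have hset : {x : Fin d → ℝ | ∀ i, x i ∈ Set.Ioc ((0 : Fin d → ℝ) i) ((0 : Fin d → ℝ) i + 1)}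
        = cube 0 := by ext; simp [cube]
    rw [hset]
    change _ = ∫ x, e x * g x
    rw [← (hasSum_cube _ heint).tsum_eq]
    have hvol : volume (cube (0 : Fin d → ℤ)) = 1 := by
      have : cube (0 : Fin d → ℤ) = Set.univ.pi fun i => Set.Ioc (0 : ℝ) 1 := by
        ext; simp [cube]
      rw [this, Real.volume_pi_Ioc]; simp
    rw [integral_tsum_of_summable_integral_norm (F := fun (n : Fin d → ℤ) x =>
      e (x + zv n) * g (x + zv n))]
    · refine setIntegral_congr_fun (cube_meas 0) fun x _ => ?_
      simp only [hF, smul_eq_mul, hep]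
      rw [tsum_mul_left]
    · intro n
      exact (heint.comp_add_right (zv n)).integrableOn
    · refine Summable.of_nonneg_of_le (fun n => integral_nonneg fun _ => norm_nonneg _)
        (fun n => ?_) (hsumm 1)
      have := norm_setIntegral_le_of_norm_le_const (μ := volume) (s := cube (0 : Fin d → ℤ))
        (f := fun x => ‖e (x + zv n) * g (x + zv n)‖)
        (C := C * ((1 + 1) ^ (d + 1) * ((1 + ‖zv n‖) ^ (d + 1))⁻¹)) (by rw [hvol]; simp) ?_
      · rw [Measure.real, hvol] at this
        simp only [ENNReal.toReal_one, mul_one] at this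
        exact (le_abs_self _).trans this
      · intro x hx
        rw [norm_norm, norm_mul]
        have hx1 : ‖x‖ ≤ 1 := by
          rw [pi_norm_le_iff_of_nonneg zero_le_one]
          intro i
          have := hx i
          simp at this
          rw [Real.norm_eq_abs, abs_le]; constructor <;> linarith [this.1, this.2]
        calc _ ≤ 1 * ‖g (x + zv n)‖ := by gcongr; exact hen _
          _ ≤ _ := by rw [one_mul]; exact hbd 1 zero_le_one x hx1 n
  have hs' : Summable (UnitAddTorus.mFourierCoeff F) := by
    convert hs using 1
    funext m; exact hcoef m
  have key := (UnitAddTorus.hasSum_mFourier_series_apply_of_summable hs' 0).tsum_eq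
  have h0 : F 0 = ∑' n, g (zv n) := by
    have := hF 0
    simp only [zero_add] at this
    rw [← this]
    rfl
  rw [← h0, ← key]
  congr 1
  funext m
  rw [hcoef]
  have : UnitAddTorus.mFourier m (0 : UnitAddTorus (Fin d)) = 1 := by
    simp [UnitAddTorus.mFourier]
  rw [this, smul_eq_mul, mul_one]

lemma mFourier_eq {d : ℕ} (m : Fin d → ℤ) (x : Fin d → ℝ) :
    UnitAddTorus.mFourier (-m) (fun i => (x i : UnitAddCircle)) =
      Complex.exp (↑(-2 * π * ⟪(WithLp.toLp 2 x : Euc d), latVec d m⟫_ℝ) * Complex.I) := by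
  simp only [UnitAddTorus.mFourier, ContinuousMap.coe_mk, fourier_coe_apply]
  rw [← Complex.exp_sum]
  congr 1
  simp only [PiLp.inner_apply, latVec, RCLike.inner_apply, conj_trivial]
  push_cast
  rw [Finset.mul_sum, Finset.sum_mul]
  refine Finset.sum_congr rfl fun i _ => ?_
  simp
  ring

lemma zv_latVec {d : ℕ} (n : Fin d → ℤ) : (WithLp.toLp 2 (zv n) : Euc d) = latVec d n := rfl

lemma sup_le_toLp {d : ℕ} (x : Fin d → ℝ) : ‖x‖ ≤ ‖(WithLp.toLp 2 x : Euc d)‖ := by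
  rw [pi_norm_le_iff_of_nonneg (norm_nonneg _)]
  intro i
  exact PiLp.norm_apply_le (WithLp.toLp 2 x : Euc d) i

lemma schwartz_decay {d : ℕ} (G : SchwartzMap (Euc d) ℂ) : ∃ C : ℝ, ∀ x : Fin d → ℝ,
    ‖G (WithLp.toLp 2 x)‖ ≤ C * ((1 + ‖x‖) ^ (d + 1))⁻¹ := by
  refine ⟨2 ^ (d + 1) * (Finset.Iic (d + 1, 0)).sup
    (fun m => SchwartzMap.seminorm ℂ m.1 m.2) G, fun x => ?_⟩
  have h1 := SchwartzMap.one_add_le_sup_seminorm_apply (𝕜 := ℂ) (m := (d + 1, 0)) (k := d + 1)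
    (n := 0) le_rfl le_rfl G (WithLp.toLp 2 x)
  rw [norm_iteratedFDeriv_zero] at h1
  rw [← div_eq_mul_inv, le_div_iff₀ (by positivity), mul_comm]
  refine le_trans ?_ h1
  gcongr
  exact sup_le_toLp x

lemma poisson_schwartz {d : ℕ} (G : SchwartzMap (Euc d) ℂ) :
    ∑' n : Zd d, G (latVec d n) = ∑' m : Zd d, 𝓕 ⇑G (latVec d m) := by
  obtain ⟨C, hC⟩ := schwartz_decay G
  have hcoef : ∀ m : Fin d → ℤ,
      ∫ x : Fin d → ℝ, UnitAddTorus.mFourier (-m) (fun i => (x i : UnitAddCircle)) *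
        G (WithLp.toLp 2 x) = 𝓕 ⇑G (latVec d m) := by
    intro m
    rw [Real.fourier_eq']
    rw [← (PiLp.volume_preserving_toLp (Fin d)).integral_comp
      (MeasurableEquiv.toLp 2 (Fin d → ℝ)).measurableEmbedding]
    simp only [mFourier_eq, smul_eq_mul]
  have hs : Summable fun m : Zd d => 𝓕 ⇑G (latVec d m) := by
    obtain ⟨C', hC'⟩ := schwartz_decay (𝓕 G)
    refine Summable.of_norm_bounded ((summable_lat d).mul_left C') fun m => ?_
    have := hC' (zv m)
    rwa [zv_latVec, SchwartzMap.fourier_coe] at this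
  have := poisson_aux (fun x : Fin d → ℝ => G (WithLp.toLp 2 x))
    (G.continuous.comp (PiLp.continuous_toLp 2 _)) C hC (by simpa only [hcoef] using hs)
  simpa only [hcoef, zv_latVec] using this

lemma affine_temperate {d : ℕ} (c : ℝ) (a : Euc d) :
    Function.HasTemperateGrowth fun y : Euc d => a + c • y := by
  fun_prop

/-- affine change of variables of a Schwartz function -/
def affComp {d : ℕ} (c : ℝ) (hc : c ≠ 0) (a : Euc d) (f : SchwartzMap (Euc d) ℂ) :
    SchwartzMap (Euc d) ℂ :=
  SchwartzMap.compCLMOfAntilipschitz ℂ (K := (‖c‖₊)⁻¹) (g := fun y : Euc d => a + c • y)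
    (affine_temperate c a) (by
      refine AntilipschitzWith.of_le_mul_dist fun x y => ?_
      rw [dist_add_left, dist_smul₀]
      have : 0 < ‖c‖ := norm_pos_iff.2 hc
      simp only [NNReal.coe_inv, coe_nnnorm]
      rw [inv_mul_cancel_left₀ this.ne']) f

lemma affComp_apply {d : ℕ} (c : ℝ) (hc : c ≠ 0) (a : Euc d) (f : SchwartzMap (Euc d) ℂ)
    (y : Euc d) : affComp c hc a f y = f (a + c • y) := rfl

/-- The Schwartz function to which Poisson summation is applied. -/
def GG {d : ℕ} (φ f : SchwartzMap (Euc d) ℂ) (h : ℝ) (hh : h ≠ 0) (ζ : Euc d) :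
    SchwartzMap (Euc d) ℂ :=
  SchwartzMap.smulLeftCLM ℂ (fun y => conj (affComp 1 one_ne_zero (h • ζ) (𝓕 φ) y))
    (affComp h⁻¹ (inv_ne_zero hh) ζ f)

lemma GG_apply {d : ℕ} (φ f : SchwartzMap (Euc d) ℂ) (h : ℝ) (hh : h ≠ 0) (ζ : Euc d)
    (y : Euc d) : GG φ f h hh ζ y = conj (𝓕 ⇑φ (h • ζ + y)) * f (ζ + h⁻¹ • y) := by
  have hg : Function.HasTemperateGrowth
      (fun y => conj (affComp 1 one_ne_zero (h • ζ) (𝓕 φ) y)) := by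
    have h1 := (affComp 1 one_ne_zero (h • ζ) (𝓕 φ)).hasTemperateGrowth
    exact (Complex.conjCLE : ℂ →L[ℝ] ℂ).hasTemperateGrowth.comp h1
  rw [GG, SchwartzMap.smulLeftCLM_apply_apply hg, affComp_apply, affComp_apply, smul_eq_mul,
    one_smul, SchwartzMap.fourier_coe]

lemma parseval {d : ℕ} (ψ f : SchwartzMap (Euc d) ℂ) :
    ∫ x, conj (ψ x) * 𝓕⁻ ⇑f x = ∫ ξ, conj (𝓕 ⇑ψ ξ) * f ξ := by
  have := SchwartzMap.integral_sesq_fourier_eq ψ f (innerSL ℂ)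
  simp only [innerSL_apply_apply, RCLike.inner_apply, SchwartzMap.fourier_coe,
    SchwartzMap.fourierInv_coe] at this
  simp only [mul_comm (conj _)]
  exact this.symm

lemma latPt_eq {d : ℕ} (h : ℝ) (z : Zd d) : latPt d h z = h • latVec d z := by
  ext i; simp [latPt, latVec]

lemma latVec_neg {d : ℕ} (z : Zd d) : latVec d (-z) = -latVec d z := by
  ext i; simp [latVec]

lemma fourier_aff {d : ℕ} (φ : SchwartzMap (Euc d) ℂ) (h : ℝ) (hh : 0 < h) (v ξ : Euc d) :
    𝓕 ⇑(affComp h⁻¹ (inv_ne_zero hh.ne') (-v) φ) ξ =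
      (h ^ d : ℂ) * (Complex.exp (↑(-2 * π * ⟪h • v, ξ⟫_ℝ) * Complex.I) * 𝓕 ⇑φ (h • ξ)) := by
  rw [Real.fourier_eq', Real.fourier_eq']
  let K : Euc d → ℂ := fun u =>
    Complex.exp (↑(-2 * π * ⟪h • u, ξ⟫_ℝ) * Complex.I) * φ (-v + u)
  have h1 := Measure.integral_comp_inv_smul_of_nonneg (volume : Measure (Euc d)) K hh.le
  have h2 := integral_add_right_eq_self (μ := (volume : Measure (Euc d))) K v
  have h3 : ∀ x : Euc d, Complex.exp (↑(-2 * π * ⟪x, ξ⟫_ℝ) * Complex.I) •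
      affComp h⁻¹ (inv_ne_zero hh.ne') (-v) φ x = K (h⁻¹ • x) := by
    intro x
    simp only [K, affComp_apply, smul_eq_mul]
    rw [smul_inv_smul₀ hh.ne']
  simp only [h3]
  rw [h1, ← h2, finrank_euclideanSpace_fin, Complex.real_smul]
  rw [← integral_const_mul (Complex.exp (↑(-2 * π * ⟪h • v, ξ⟫_ℝ) * Complex.I)), Complex.ofReal_pow]
  congr 2
  funext u
  simp only [K, smul_eq_mul]
  rw [← mul_assoc, ← Complex.exp_add]
  congr 2
  · rw [smul_add, inner_add_left, real_inner_smul_left u, real_inner_smul_right u]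
    push_cast
    ring
  · congr 1
    abel

lemma term_eq {d : ℕ} (φ f : SchwartzMap (Euc d) ℂ) (h : ℝ) (hh : 0 < h) (ζ v : Euc d) :
    Complex.exp (-2 * π * Complex.I * (⟪h • v, ζ⟫_ℝ : ℂ)) *
      (∫ x, conj (φ (h⁻¹ • (x - h • v))) *
            ∫ ξ, Complex.exp (2 * π * Complex.I * (⟪x, ξ⟫_ℝ : ℂ)) * f ξ)
      = 𝓕 ⇑(GG φ f h hh.ne' ζ) (-v) := by
  have h1 : ∀ x : Euc d, (∫ ξ, Complex.exp (2 * π * Complex.I * (⟪x, ξ⟫_ℝ : ℂ)) * f ξ)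
      = 𝓕⁻ ⇑f x := by
    intro x
    rw [Real.fourierInv_eq']
    congr 1
    funext ξ
    rw [smul_eq_mul, real_inner_comm]
    congr 2
    push_cast
    ring
  have h2 : ∀ x : Euc d, φ (h⁻¹ • (x - h • v)) =
      affComp h⁻¹ (inv_ne_zero hh.ne') (-v) φ x := by
    intro x
    rw [affComp_apply, smul_sub, inv_smul_smul₀ hh.ne']
    congr 1
    abel
  simp only [h1, h2]
  rw [parseval]
  simp only [fourier_aff φ h hh]
  let M : Euc d → ℂ := fun ξ => conj ((h ^ d : ℂ) *
    (Complex.exp (↑(-2 * π * ⟪h • v, ξ⟫_ℝ) * Complex.I) * 𝓕 ⇑φ (h • ξ))) * f ξ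
  have h3 := integral_add_left_eq_self (μ := (volume : Measure (Euc d))) M ζ
  change _ * ∫ ξ, M ξ = _
  rw [← h3, Real.fourier_eq']
  let N : Euc d → ℂ := fun w => Complex.exp (↑(2 * π * ⟪h • w, v⟫_ℝ) * Complex.I) *
    (conj (𝓕 ⇑φ (h • ζ + h • w)) * f (ζ + w))
  have h4 : ∀ y : Euc d, Complex.exp (↑(-2 * π * ⟪y, -v⟫_ℝ) * Complex.I) •
      GG φ f h hh.ne' ζ y = N (h⁻¹ • y) := by
    intro y
    simp only [N, GG_apply, smul_eq_mul]
    rw [smul_inv_smul₀ hh.ne', inner_neg_right]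
    congr 3
    push_cast
    ring
  simp only [h4]
  rw [Measure.integral_comp_inv_smul_of_nonneg (volume : Measure (Euc d)) N hh.le,
    finrank_euclideanSpace_fin, Complex.real_smul, ← integral_const_mul, ← integral_const_mul]
  congr 1
  funext w
  simp only [M, N, map_mul, map_pow, Complex.conj_ofReal, ← Complex.exp_conj, Complex.conj_I,
    smul_add]
  have h5 : Complex.exp (↑(2 * π * ⟪h • w, v⟫_ℝ) * Complex.I) =
      Complex.exp (-2 * π * Complex.I * (⟪h • v, ζ⟫_ℝ : ℂ)) *
        Complex.exp (↑(-2 * π * ⟪h • v, ζ + w⟫_ℝ) * -Complex.I) := by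
    rw [← Complex.exp_add]
    congr 1
    rw [inner_add_right, real_inner_smul_left w, real_inner_smul_left v w, real_inner_comm v w]
    push_cast
    ring
  rw [h5]
  push_cast
  ring

/-- For `φ ∈ 𝒮(ℝ^d)`, `h > 0`, `f ∈ 𝒮(ℝ^d)` and `ζ ∈ h⁻¹𝕋^d`,
`Q_h f(ζ) = ∑_{n∈ℤ^d} conj(φ̂(hζ+n)) f(ζ + h⁻¹n)` where `Q_h = F_h P_h 𝓕*`; concretely,
`h^d ∑_{z∈hℤ^d} e^{−2πi z·ζ} (h^{−d} ∫ conj(φ(h⁻¹(x−z))) (∫ e^{2πi x·ξ} f(ξ) dξ) dx)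
  = ∑_{n∈ℤ^d} conj(φ̂(hζ+n)) f(ζ+h⁻¹n)`. -/
theorem discrete_fourier_of_projection
    (d : ℕ) (φ f : SchwartzMap (Euc d) ℂ) (h : ℝ) (hh : 0 < h) (ζ : Euc d) :
    (h ^ d : ℂ) * ∑' z : Zd d,
        Complex.exp (-2 * π * Complex.I * (⟪latPt d h z, ζ⟫_ℝ : ℂ)) *
          ((h ^ d : ℂ)⁻¹ * ∫ x, conj (φ (h⁻¹ • (x - latPt d h z))) *
            ∫ ξ, Complex.exp (2 * π * Complex.I * (⟪x, ξ⟫_ℝ : ℂ)) * f ξ)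
    = ∑' n : Zd d, conj (𝓕 ⇑φ (h • ζ + latVec d n)) * f (ζ + h⁻¹ • latVec d n) := by
  have hd : (h ^ d : ℂ) ≠ 0 := pow_ne_zero _ (by exact_mod_cast hh.ne')
  simp only [← GG_apply φ f h hh.ne' ζ]
  rw [poisson_schwartz, ← tsum_mul_left, ← (Equiv.neg (Zd d)).tsum_eq (fun m => 𝓕 ⇑(GG φ f h hh.ne' ζ) (latVec d m))]
  congr 1
  funext z
  rw [Equiv.neg_apply, latVec_neg, ← term_eq φ f h hh ζ, latPt_eq]
  rw [mul_left_comm, mul_inv_cancel_left₀ hd]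
end
end

section
/- Let V : ℝ^d → ℝ be continuous with V ≥ 1, such that V⁻¹ is uniformly continuous and there is c₁ > 0 with c₁⁻¹ V(x) ≤ V(y) ≤ c₁ V(x) whenever |x−y| ≤ 1. Then V is relatively bounded with respect to −Δ + V on C_c^∞(ℝ^d): there is C > 0 such that for all u ∈ C_c^∞(ℝ^d), ‖V u‖_{L²(ℝ^d)} ≤ C ( ‖(−Δ + V) u‖_{L²(ℝ^d)} + ‖u‖_{L²(ℝ^d)} ). -/
open MeasureTheory Complex Real
open scoped ENNReal

noncomputable section

/-- The Laplacian `Δu(x) = ∑_j ∂²u/∂x_j²(x)` of a function on `ℝ^d`. -/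
def lapl (d : ℕ) (u : Euc d → ℂ) (x : Euc d) : ℂ :=
  ∑ j : Fin d, fderiv ℝ (fun y => fderiv ℝ u y (EuclideanSpace.single j (1 : ℝ))) x
      (EuclideanSpace.single j (1 : ℝ))

open scoped Convolution in
/-- Mollification. -/
def cvl (d : ℕ) (φ V : Euc d → ℝ) : Euc d → ℝ :=
  φ ⋆[ContinuousLinearMap.lsmul ℝ ℝ, volume] V

theorem cvl_apply (d : ℕ) (φ V : Euc d → ℝ) (x : Euc d) :
    cvl d φ V x = ∫ t, φ t * V (x - t) := rfl

theorem cvl_int (d : ℕ) (φ V : Euc d → ℝ) (hφ : Continuous φ) (hc : HasCompactSupport φ)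
    (hV : Continuous V) (x : Euc d) : Integrable (fun t => φ t * V (x - t)) := by
  apply Continuous.integrable_of_hasCompactSupport (by fun_prop)
  exact hc.mul_right

theorem cvl_contDiff (d : ℕ) (φ V : Euc d → ℝ) (hφ : ContDiff ℝ (⊤ : ℕ∞) φ)
    (hc : HasCompactSupport φ) (hV : Continuous V) : ContDiff ℝ (⊤ : ℕ∞) (cvl d φ V) :=
  hc.contDiff_convolution_left _ hφ hV.locallyIntegrable

theorem cvl_fderiv (d : ℕ) (φ V : Euc d → ℝ) (hφ : ContDiff ℝ (⊤ : ℕ∞) φ)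
    (hc : HasCompactSupport φ) (hV : Continuous V) (x v : Euc d) :
    fderiv ℝ (cvl d φ V) x v = cvl d (fun y => fderiv ℝ φ y v) V x := by
  have h1 : ContDiff ℝ 1 φ := hφ.of_le (by exact_mod_cast le_top)
  have h := hc.hasFDerivAt_convolution_left (ContinuousLinearMap.lsmul ℝ ℝ : ℝ →L[ℝ] ℝ →L[ℝ] ℝ)
    h1 (hV.locallyIntegrable (μ := volume)) x
  have h2 := (hc.fderiv (𝕜 := ℝ)).convolutionExists_left
    ((ContinuousLinearMap.lsmul ℝ ℝ : ℝ →L[ℝ] ℝ →L[ℝ] ℝ).precompL (Euc d))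
    (h1.continuous_fderiv (by norm_num)) (hV.locallyIntegrable (μ := volume)) x
  unfold cvl
  rw [h.fderiv]
  simp_rw [convolution_def, ContinuousLinearMap.integral_apply h2]
  rfl

theorem cvl_bound (d : ℕ) (φ V : Euc d → ℝ) (hφ : Continuous φ) (hc : HasCompactSupport φ)
    (hs : tsupport φ ⊆ Metric.closedBall 0 1) (hV : Continuous V) (hV1 : ∀ x, 1 ≤ V x) (c : ℝ)
    (hcomp : ∀ x y : Euc d, dist x y ≤ 1 → V y ≤ c * V x) (x : Euc d) :
    |cvl d φ V x| ≤ (∫ t, |φ t|) * c * V x := by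
  rw [cvl_apply, mul_assoc, ← integral_mul_const]
  refine (abs_integral_le_integral_abs).trans ?_
  apply integral_mono (cvl_int d φ V hφ hc hV x).abs
  · exact ((hφ.integrable_of_hasCompactSupport hc).abs).mul_const _
  intro t
  simp only [abs_mul]
  by_cases ht : φ t = 0
  · simp [ht]
  have : t ∈ Metric.closedBall (0 : Euc d) 1 := hs (subset_tsupport _ ht)
  have h3 : dist x (x - t) ≤ 1 := by simpa [dist_eq_norm] using this
  have := hcomp _ _ h3
  have h4 := hV1 (x - t)
  rw [abs_of_pos (by linarith : 0 < V (x - t))]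
  gcongr

theorem cvl_lower (d : ℕ) (φ V : Euc d → ℝ) (hφ : Continuous φ) (hc : HasCompactSupport φ)
    (hs : tsupport φ ⊆ Metric.closedBall 0 1) (h0 : ∀ x, 0 ≤ φ x) (h1 : ∫ t, φ t = 1)
    (hV : Continuous V) (c : ℝ)
    (hcomp : ∀ x y : Euc d, dist x y ≤ 1 → c * V x ≤ V y) (x : Euc d) :
    c * V x ≤ cvl d φ V x := by
  rw [cvl_apply, ← one_mul (c * V x), ← h1, ← integral_mul_const]
  apply integral_mono _ (cvl_int d φ V hφ hc hV x)
  · intro t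
    by_cases ht : φ t = 0
    · simp [ht]
    have : t ∈ Metric.closedBall (0 : Euc d) 1 := hs (subset_tsupport _ ht)
    have h3 : dist x (x - t) ≤ 1 := by simpa [dist_eq_norm] using this
    exact mul_le_mul_of_nonneg_left (hcomp _ _ h3) (h0 t)
  · exact ((hφ.integrable_of_hasCompactSupport hc)).mul_const _

theorem contDiff_dir {d : ℕ} {F : Type*} [NormedAddCommGroup F] [NormedSpace ℝ F] {f : Euc d → F}
    (hf : ContDiff ℝ (⊤ : ℕ∞) f) (v : Euc d) :
    ContDiff ℝ (⊤ : ℕ∞) (fun y => fderiv ℝ f y v) :=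
  (hf.fderiv_right (m := ((⊤ : ℕ∞) : WithTop ℕ∞)) (by simp)).clm_apply contDiff_const

/-- The regularised potential. -/
theorem exists_W (d : ℕ) (V : Euc d → ℝ)
    (hVcont : Continuous V) (hV1 : ∀ x, 1 ≤ V x) (c₁ : ℝ)
    (hVcomp : ∀ x y : Euc d, dist x y ≤ 1 → c₁⁻¹ * V x ≤ V y ∧ V y ≤ c₁ * V x) :
    ∃ W : Euc d → ℝ, ∃ K : Fin d → ℝ, ContDiff ℝ (⊤ : ℕ∞) W ∧ (∀ x, c₁⁻¹ * V x ≤ W x) ∧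
      (∀ x, W x ≤ c₁ * V x) ∧
      ∀ j x, fderiv ℝ (fun y => fderiv ℝ W y (EuclideanSpace.single j (1 : ℝ))) x
        (EuclideanSpace.single j (1 : ℝ)) ≤ K j * V x := by
  let b : ContDiffBump (0 : Euc d) := ⟨1/2, 1, by norm_num, by norm_num⟩
  let φ := b.normed volume
  have hφ : ContDiff ℝ (⊤ : ℕ∞) φ := b.contDiff_normed
  have hc : HasCompactSupport φ := b.hasCompactSupport_normed
  have hs : tsupport φ ⊆ Metric.closedBall 0 1 := b.tsupport_normed_eq.subset
  have h0 : ∀ x, 0 ≤ φ x := b.nonneg_normed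
  have h1 : ∫ t, φ t = 1 := b.integral_normed
  let e : Fin d → Euc d := fun j => EuclideanSpace.single j (1 : ℝ)
  refine ⟨cvl d φ V, fun j => (∫ t, |fderiv ℝ (fun y => fderiv ℝ φ y (e j)) t (e j)|) * c₁,
    cvl_contDiff d φ V hφ hc hVcont,
    cvl_lower d φ V hφ.continuous hc hs h0 h1 hVcont _ (fun x y h => (hVcomp x y h).1), ?_, ?_⟩
  · intro x
    have := cvl_bound d φ V hφ.continuous hc hs hVcont hV1 _ (fun x y h => (hVcomp x y h).2) x
    simp only [abs_of_nonneg (h0 _), h1, one_mul] at this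
    exact (le_abs_self _).trans this
  · intro j x
    have hφ1 := contDiff_dir hφ (e j)
    have hφ2 := contDiff_dir hφ1 (e j)
    have hc1 := hc.fderiv_apply ℝ (e j)
    have hc2 := hc1.fderiv_apply ℝ (e j)
    have e1 : (fun y => fderiv ℝ (cvl d φ V) y (e j)) = cvl d (fun y => fderiv ℝ φ y (e j)) V :=
      funext fun y => cvl_fderiv d φ V hφ hc hVcont y (e j)
    change fderiv ℝ (fun y => fderiv ℝ (cvl d φ V) y (e j)) x (e j) ≤ _
    rw [e1, cvl_fderiv d _ V hφ1 hc1 hVcont x (e j)]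
    refine (le_abs_self _).trans (cvl_bound d _ V hφ2.continuous hc2 ?_ hVcont hV1 _
      (fun x y h => (hVcomp x y h).2) x)
    exact (tsupport_fderiv_apply_subset ℝ (e j)).trans
      ((tsupport_fderiv_apply_subset ℝ (e j)).trans hs)

theorem ibp1 {d : ℕ} {W g : Euc d → ℝ} (hW : ContDiff ℝ (⊤ : ℕ∞) W) (hg : ContDiff ℝ (⊤ : ℕ∞) g)
    (hc : HasCompactSupport g) (v : Euc d) :
    ∫ x, W x * fderiv ℝ g x v = - ∫ x, fderiv ℝ W x v * g x := by
  have hW1 := (contDiff_dir hW v).continuous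
  have hg1 := (contDiff_dir hg v).continuous
  have hW0 := hW.continuous
  have hg0 := hg.continuous
  apply integral_mul_fderiv_eq_neg_fderiv_mul_of_integrable
  · exact Continuous.integrable_of_hasCompactSupport (by fun_prop) hc.mul_left
  · exact Continuous.integrable_of_hasCompactSupport (by fun_prop) (hc.fderiv_apply ℝ v).mul_left
  · exact Continuous.integrable_of_hasCompactSupport (by fun_prop) hc.mul_left
  · exact fun x _ => hW.differentiable (by simp) x
  · exact fun x _ => hg.differentiable (by simp) x

theorem ibp2 {d : ℕ} {W g : Euc d → ℝ} (hW : ContDiff ℝ (⊤ : ℕ∞) W) (hg : ContDiff ℝ (⊤ : ℕ∞) g)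
    (hc : HasCompactSupport g) (v : Euc d) :
    ∫ x, W x * fderiv ℝ (fun y => fderiv ℝ g y v) x v
      = ∫ x, fderiv ℝ (fun y => fderiv ℝ W y v) x v * g x := by
  rw [ibp1 hW (contDiff_dir hg v) (hc.fderiv_apply ℝ v), ibp1 (contDiff_dir hW v) hg hc, neg_neg]

theorem second_deriv {d : ℕ} {u : Euc d → ℂ} (hu : ContDiff ℝ (⊤ : ℕ∞) u) (x v : Euc d) :
    2 * inner ℝ (u x) (fderiv ℝ (fun y => fderiv ℝ u y v) x v) ≤
      fderiv ℝ (fun y => fderiv ℝ (fun z => inner ℝ (u z) (u z)) y v) x v := by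
  have hd := hu.differentiable (by simp)
  have hd1 := (contDiff_dir hu v).differentiable (by simp)
  have e1 : (fun y => fderiv ℝ (fun z => inner ℝ (u z) (u z)) y v)
      = fun y => 2 * inner ℝ (u y) (fderiv ℝ u y v) := by
    funext y
    rw [fderiv_inner_apply ℝ (hd y) (hd y), real_inner_comm (u y)]
    ring
  rw [e1, fderiv_const_mul ((hd x).inner ℝ (hd1 x))]
  simp only [smul_apply, smul_eq_mul]
  rw [fderiv_inner_apply ℝ (hd x) (hd1 x)]
  have := real_inner_self_nonneg (x := fderiv ℝ u x v)
  linarith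

theorem eLpNorm_two {d : ℕ} {f : Euc d → ℂ} (hf : Continuous f) (hc : HasCompactSupport f) :
    eLpNorm f 2 volume = ENNReal.ofReal (√(∫ x, ‖f x‖ ^ 2)) := by
  rw [(hf.memLp_of_hasCompactSupport hc).eLpNorm_eq_integral_rpow_norm (by simp) (by simp)]
  simp [Real.sqrt_eq_rpow]

theorem lapl_zero {d : ℕ} (u : Euc d → ℂ) (x : Euc d) (hx : x ∉ tsupport u) :
    lapl d u x = 0 := by
  refine Finset.sum_eq_zero fun j _ => ?_
  have h1 := tsupport_fderiv_apply_subset ℝ (f := u) (EuclideanSpace.single j (1 : ℝ))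
  have h2 := tsupport_fderiv_apply_subset ℝ
    (f := fun y => fderiv ℝ u y (EuclideanSpace.single j (1 : ℝ)))
    (EuclideanSpace.single j (1 : ℝ))
  have h3 := fun h => hx (h1 (h2 h))
  exact image_eq_zero_of_notMem_tsupport (f := fun z =>
    fderiv ℝ (fun y => fderiv ℝ u y (EuclideanSpace.single j (1 : ℝ))) z
      (EuclideanSpace.single j (1 : ℝ))) h3

set_option maxHeartbeats 1000000 in
theorem potential_relatively_bounded_continuum
    (d : ℕ) (V : Euc d → ℝ)
    (hVcont : Continuous V) (hV1 : ∀ x, 1 ≤ V x)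
    (hVinv : UniformContinuous fun x => (V x)⁻¹)
    (c₁ : ℝ) (hc₁ : 0 < c₁)
    (hVcomp : ∀ x y : Euc d, dist x y ≤ 1 → c₁⁻¹ * V x ≤ V y ∧ V y ≤ c₁ * V x) :
    ∃ C > (0 : ℝ), ∀ u : Euc d → ℂ, ContDiff ℝ (⊤ : ℕ∞) u → HasCompactSupport u →
      eLpNorm (fun x => (V x : ℂ) * u x) 2 volume ≤
        ENNReal.ofReal C *
          (eLpNorm (fun x => -(lapl d u x) + (V x : ℂ) * u x) 2 volume +
            eLpNorm u 2 volume) := by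
  obtain ⟨W, K, hW, hWl, hWu, hWK⟩ := exists_W d V hVcont hV1 c₁ hVcomp
  set S : ℝ := ∑ j, K j with hS
  set A : ℝ := 2 * c₁ ^ 4 + S ^ 2 * c₁ ^ 2 / 2 + 1 with hA
  have hA0 : 0 < A := by positivity
  refine ⟨√A, Real.sqrt_pos.2 hA0, fun u hu hc => ?_⟩
  set f : Euc d → ℂ := fun x => -(lapl d u x) + (V x : ℂ) * u x with hf
  have hu0 := hu.continuous
  have hW0 := hW.continuous
  have hLc : Continuous (lapl d u) := by
    unfold lapl
    exact continuous_finsetSum _ fun j _ => (contDiff_dir (contDiff_dir hu _) _).continuous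
  have hfc : Continuous f := by fun_prop
  have hcL : HasCompactSupport (lapl d u) := by
    exact HasCompactSupport.intro hc (lapl_zero u)
  have hcVu : HasCompactSupport (fun x => (V x : ℂ) * u x) := hc.mul_left
  have hVuc : Continuous (fun x => (V x : ℂ) * u x) := by fun_prop
  have hcf : HasCompactSupport f := hcL.neg.add hcVu
  rw [eLpNorm_two hVuc hcVu, eLpNorm_two hfc hcf, eLpNorm_two hu0 hc,
    ← ENNReal.ofReal_add (by positivity) (by positivity), ← ENNReal.ofReal_mul (by positivity)]
  apply ENNReal.ofReal_le_ofReal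
  set g : Euc d → ℝ := fun z => inner ℝ (u z) (u z) with hg
  have hgs : ContDiff ℝ (⊤ : ℕ∞) g := hu.inner ℝ hu
  have hgc : HasCompactSupport g := HasCompactSupport.intro hc fun x hx => by
    simp [hg, image_eq_zero_of_notMem_tsupport hx]
  have hgn : ∀ x, g x = ‖u x‖ ^ 2 := fun x => real_inner_self_eq_norm_sq _
  have iu : Integrable (fun x => ‖u x‖ ^ 2) := by
    have h : Integrable g volume := hgs.continuous.integrable_of_hasCompactSupport hgc
    exact h.congr (Filter.Eventually.of_forall hgn)
  have hfn : HasCompactSupport (fun x => ‖f x‖ ^ 2) := HasCompactSupport.intro hcf fun x hx => by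
    simp [image_eq_zero_of_notMem_tsupport hx]
  have ifn : Integrable (fun x => ‖f x‖ ^ 2) :=
    Continuous.integrable_of_hasCompactSupport (by fun_prop) hfn
  have hVn : HasCompactSupport (fun x => ‖(V x : ℂ) * u x‖ ^ 2) :=
    HasCompactSupport.intro hcVu fun x hx => by
      have := image_eq_zero_of_notMem_tsupport hx
      rw [this]; simp
  have iVn : Integrable (fun x => ‖(V x : ℂ) * u x‖ ^ 2) :=
    Continuous.integrable_of_hasCompactSupport (by fun_prop) hVn
  let e : Fin d → Euc d := fun j => EuclideanSpace.single j (1 : ℝ)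
  let D : (Euc d → ℝ) → Fin d → Euc d → ℝ := fun h j x =>
    fderiv ℝ (fun y => fderiv ℝ h y (e j)) x (e j)
  have hDc : ∀ h : Euc d → ℝ, ContDiff ℝ (⊤ : ℕ∞) h → ∀ j, Continuous (D h j) := fun h hh j =>
    (contDiff_dir (contDiff_dir hh _) _).continuous
  have i1 : ∀ j, Integrable (fun x => W x * D g j x) := fun j =>
    Continuous.integrable_of_hasCompactSupport (hW0.mul (hDc g hgs j))
      ((hgc.fderiv_apply ℝ (e j)).fderiv_apply ℝ (e j)).mul_left
  have i2 : ∀ j, Integrable (fun x => D W j x * g x) := fun j =>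
    Continuous.integrable_of_hasCompactSupport ((hDc W hW j).mul hgs.continuous) hgc.mul_left
  have key : ∫ x, ∑ j, W x * D g j x = ∫ x, ∑ j, D W j x * g x := by
    rw [integral_finsetSum _ fun j _ => i1 j, integral_finsetSum _ fun j _ => i2 j]
    exact Finset.sum_congr rfl fun j _ => ibp2 hW hgs hgc (e j)
  -- pointwise inequality
  have pt : ∀ x, ‖(V x : ℂ) * u x‖ ^ 2 + c₁ * ∑ j, D W j x * g x - c₁ * ∑ j, W x * D g j x
      ≤ A * ‖f x‖ ^ 2 + A * ‖u x‖ ^ 2 := by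
    intro x
    have hlap : inner ℝ (u x) (lapl d u x) =
        ∑ j, inner ℝ (u x) (fderiv ℝ (fun y => fderiv ℝ u y (e j)) x (e j)) := by
      unfold lapl
      rw [inner_sum]
    have h2 : 2 * inner ℝ (u x) (lapl d u x) ≤ ∑ j, D g j x := by
      rw [hlap, Finset.mul_sum]
      exact Finset.sum_le_sum fun j _ => second_deriv hu x (e j)
    have h3 : inner ℝ (u x) (f x) = - inner ℝ (u x) (lapl d u x) + V x * ‖u x‖ ^ 2 := by
      have : f x = -(lapl d u x) + V x • u x := by simp [hf]
      rw [this, inner_add_right, inner_neg_right, real_inner_smul_right,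
        real_inner_self_eq_norm_sq]
    have h4 : inner ℝ (u x) (f x) ≤ ‖u x‖ * ‖f x‖ := real_inner_le_norm _ _
    have h5 : ∑ j, D W j x ≤ S * V x := by
      rw [hS, Finset.sum_mul]
      exact Finset.sum_le_sum fun j _ => hWK j x
    have hn : ‖(V x : ℂ) * u x‖ = V x * ‖u x‖ := by
      rw [norm_mul, Complex.norm_real, Real.norm_of_nonneg (by linarith [hV1 x])]
    rw [hn, ← Finset.sum_mul, ← Finset.mul_sum, hgn]
    generalize (∑ j, D g j x) = G at *
    generalize (∑ j, D W j x) = H at *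
    have hv := hV1 x
    have hwl := hWl x
    have hwu := hWu x
    have ha : 0 ≤ ‖u x‖ := norm_nonneg _
    have hb : 0 ≤ ‖f x‖ := norm_nonneg _
    have h6 : 2 * (V x * ‖u x‖ ^ 2) ≤ 2 * (‖u x‖ * ‖f x‖) + G := by linarith
    generalize ‖u x‖ = a at *
    generalize ‖f x‖ = b at *
    generalize V x = v at *
    generalize W x = w at *
    have hw0 : 0 ≤ w := le_trans (by positivity) hwl
    have hvw : v ≤ c₁ * w := by
      rwa [inv_mul_le_iff₀ hc₁] at hwl
    have h7 : c₁ * w * (2 * (v * a ^ 2)) ≤ c₁ * w * (2 * (a * b) + G) :=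
      mul_le_mul_of_nonneg_left h6 (by positivity)
    have h8 : v * (2 * (v * a ^ 2)) ≤ c₁ * w * (2 * (v * a ^ 2)) :=
      mul_le_mul_of_nonneg_right hvw (by positivity)
    have h9 : c₁ * w * (2 * (a * b)) ≤ c₁ * (c₁ * v) * (2 * (a * b)) := by gcongr
    have h10 : c₁ * (H * a ^ 2) ≤ c₁ * (S * v * a ^ 2) := by gcongr
    have h11 : c₁ * (c₁ * v) * (2 * (a * b)) ≤ 1 / 2 * (v * a) ^ 2 + 2 * c₁ ^ 4 * b ^ 2 := by
      nlinarith [sq_nonneg (v * a - 2 * c₁ ^ 2 * b)]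
    have h12 : c₁ * (S * v * a ^ 2) ≤ 1 / 2 * (v * a) ^ 2 + S ^ 2 * c₁ ^ 2 / 2 * a ^ 2 := by
      nlinarith [sq_nonneg (v * a - S * c₁ * a)]
    have h13 : 2 * c₁ ^ 4 * b ^ 2 ≤ A * b ^ 2 := by
      gcongr
      have : 0 ≤ S ^ 2 * c₁ ^ 2 / 2 := by positivity
      linarith
    have h14 : S ^ 2 * c₁ ^ 2 / 2 * a ^ 2 ≤ A * a ^ 2 := by
      gcongr
      have : 0 ≤ 2 * c₁ ^ 4 := by positivity
      linarith
    linarith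
  have main : ∫ x, ‖(V x : ℂ) * u x‖ ^ 2 ≤ A * (∫ x, ‖f x‖ ^ 2) + A * ∫ x, ‖u x‖ ^ 2 := by
    have j1 : Integrable (fun x => c₁ * ∑ j, D W j x * g x) :=
      (integrable_finsetSum _ fun j _ => i2 j).const_mul _
    have j2 : Integrable (fun x => c₁ * ∑ j, W x * D g j x) :=
      (integrable_finsetSum _ fun j _ => i1 j).const_mul _
    have := integral_mono ((iVn.add j1).sub j2) ((ifn.const_mul A).add (iu.const_mul A)) pt
    simp only [Pi.add_apply, Pi.sub_apply] at this
    rw [integral_add (ifn.const_mul A) (iu.const_mul A), integral_const_mul,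
      integral_const_mul] at this
    have e1 : ∫ x, (‖(V x : ℂ) * u x‖ ^ 2 + c₁ * ∑ j, D W j x * g x
        - c₁ * ∑ j, W x * D g j x) = ∫ x, ‖(V x : ℂ) * u x‖ ^ 2 := by
      have h := integral_sub (iVn.add j1) j2
      simp only [Pi.add_apply] at h
      rw [h]
      rw [integral_add iVn j1, integral_const_mul, integral_const_mul, key]
      ring
    rw [← e1]
    exact this
  have p1 : 0 ≤ ∫ x, ‖f x‖ ^ 2 := integral_nonneg fun x => by positivity
  have p2 : 0 ≤ ∫ x, ‖u x‖ ^ 2 := integral_nonneg fun x => by positivity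
  rw [Real.sqrt_le_left (by positivity), mul_pow, Real.sq_sqrt hA0.le, add_sq,
    Real.sq_sqrt p1, Real.sq_sqrt p2]
  have p3 : 0 ≤ A * (2 * √(∫ x, ‖f x‖ ^ 2) * √(∫ x, ‖u x‖ ^ 2)) := by positivity
  linarith
end
end

section
/- Let V : ℝ^d → ℝ be continuous with V ≥ 1, such that V⁻¹ is uniformly continuous and there is c₁ > 0 with c₁⁻¹ V(x) ≤ V(y) ≤ c₁ V(x) whenever |x−y| ≤ 1. Then V is relatively bounded with respect to H_h uniformly in the mesh size: there is C > 0, independent of h ∈ (0,1], such that for every finitely supported v : hℤ^d → ℂ, ‖V v‖_h ≤ C ( ‖H_h v‖_h + ‖v‖_h ), where (Vv)(z) = V(z)v(z) and H_h = H_{0,h} + V. -/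
open MeasureTheory Complex Real

noncomputable section

/-- The `ℓ²(hℤ^d)`-norm `‖v‖_h = (h^d ∑_z |v(hz)|²)^{1/2}`. -/
def normh (d : ℕ) (h : ℝ) (v : Zd d → ℂ) : ℝ :=
  Real.sqrt (h ^ d * ∑' z : Zd d, ‖v z‖ ^ 2)

/-- The discrete Schrödinger operator `H_h = H_{0,h} + V` acting on functions on `hℤ^d`:
`(H_h v)(hz) = h⁻² ∑_j (2 v(hz) − v(hz+he_j) − v(hz−he_j)) + V(hz) v(hz)`. -/
def discSchrodinger (d : ℕ) (h : ℝ) (V : Euc d → ℝ) (v : Zd d → ℂ) (z : Zd d) : ℂ :=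
  (h ^ 2)⁻¹ * ∑ j : Fin d, (2 * v z - v (z + Pi.single j 1) - v (z - Pi.single j 1))
    + (V (latPt d h z) : ℂ) * v z

lemma aux_chain {d : ℕ} {V : Euc d → ℝ} (hV1 : ∀ x, 1 ≤ V x) {c : ℝ} (hc : 1 ≤ c)
    (H : ∀ x y : Euc d, dist x y ≤ 1 → V y ≤ c * V x) (n : ℕ) :
    ∀ x y : Euc d, dist x y ≤ n → V y ≤ c ^ n * V x := by
  induction n with
  | zero =>
    intro x y hxy
    have : x = y := by
      apply dist_le_zero.1
      simpa using hxy
    subst this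
    simp
  | succ n ih =>
    intro x y hxy
    push_cast at hxy
    have hn : (0 : ℝ) < n + 1 := by positivity
    set m : Euc d := AffineMap.lineMap x y ((n : ℝ) / (n + 1)) with hm
    have h1 : dist x m ≤ n := by
      rw [hm, dist_left_lineMap, Real.norm_of_nonneg (by positivity)]
      calc (n : ℝ) / (n + 1) * dist x y ≤ (n : ℝ) / (n + 1) * (n + 1) := by gcongr
        _ = n := by field_simp
    have h2 : dist m y ≤ 1 := by
      rw [hm, dist_lineMap_right]
      have : (1 : ℝ) - n / (n + 1) = 1 / (n + 1) := by field_simp; ring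
      rw [this, Real.norm_of_nonneg (by positivity)]
      calc (1 : ℝ) / (n + 1) * dist x y ≤ (1 : ℝ) / (n + 1) * (n + 1) := by gcongr
        _ = 1 := by field_simp
    calc V y ≤ c * V m := H _ _ h2
      _ ≤ c * (c ^ n * V x) := by gcongr; exact ih _ _ h1
      _ = c ^ (n + 1) * V x := by ring

lemma aux_exp {d : ℕ} {V : Euc d → ℝ} (hV1 : ∀ x, 1 ≤ V x) {c : ℝ} (hc : 1 ≤ c)
    (H : ∀ x y : Euc d, dist x y ≤ 1 → V y ≤ c * V x) (x y : Euc d) :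
    V y * Real.exp (-(Real.log c * dist x y)) ≤ c * V x := by
  have h0 : 0 < c := by linarith
  have hl : 0 ≤ Real.log c := Real.log_nonneg hc
  have hx := hV1 x
  have h1 := aux_chain hV1 hc H ⌈dist x y⌉₊ x y (Nat.le_ceil _)
  have h2 : c ^ ⌈dist x y⌉₊ ≤ c * Real.exp (Real.log c * dist x y) := by
    have : c ^ ⌈dist x y⌉₊ = Real.exp (Real.log c * (⌈dist x y⌉₊ : ℝ)) := by
      rw [mul_comm, Real.exp_nat_mul, Real.exp_log h0]
    rw [this]
    nth_rewrite 2 [← Real.exp_log h0]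
    rw [← Real.exp_add]
    apply Real.exp_le_exp.2
    have := (Nat.ceil_lt_add_one (dist_nonneg (x := x) (y := y))).le
    nlinarith
  rw [Real.exp_neg]
  rw [← div_eq_mul_inv, div_le_iff₀ (Real.exp_pos _)]
  calc V y ≤ _ := h1
    _ ≤ c * Real.exp (Real.log c * dist x y) * V x := by gcongr
    _ = _ := by ring

/-- Regularised weight. -/
lemma aux_weight {d : ℕ} {V : Euc d → ℝ} (hV1 : ∀ x, 1 ≤ V x) {c : ℝ} (hc : 1 ≤ c)
    (H : ∀ x y : Euc d, dist x y ≤ 1 → V y ≤ c * V x) :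
    ∃ W : Euc d → ℝ, (∀ x, V x ≤ W x) ∧ (∀ x, W x ≤ c * V x) ∧
      ∀ x y, W x ≤ Real.exp (Real.log c * dist x y) * W y := by
  have hl : 0 ≤ Real.log c := Real.log_nonneg hc
  have hb : ∀ x, BddAbove (Set.range fun y => V y * Real.exp (-(Real.log c * dist x y))) := by
    intro x
    refine ⟨c * V x, ?_⟩
    rintro _ ⟨y, rfl⟩
    exact aux_exp hV1 hc H x y
  refine ⟨fun x => ⨆ y, V y * Real.exp (-(Real.log c * dist x y)), ?_, ?_, ?_⟩
  · intro x
    have := le_ciSup (hb x) x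
    simpa using this
  · intro x
    exact ciSup_le fun y => aux_exp hV1 hc H x y
  · intro x y
    apply ciSup_le
    intro u
    have h1 := le_ciSup (hb y) u
    have hu := hV1 u
    calc V u * Real.exp (-(Real.log c * dist x u))
        ≤ V u * (Real.exp (Real.log c * dist x y) * Real.exp (-(Real.log c * dist y u))) := by
          rw [← Real.exp_add]
          gcongr
          have := dist_triangle_left y u x
          nlinarith
      _ = Real.exp (Real.log c * dist x y) * (V u * Real.exp (-(Real.log c * dist y u))) := by ring
      _ ≤ _ := by gcongr

lemma aux_dist (d : ℕ) (h : ℝ) (hh : 0 < h) (z : Zd d) (j : Fin d) :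
    dist (latPt d h z) (latPt d h (z + Pi.single j 1)) = h := by
  rw [EuclideanSpace.dist_eq]
  have : ∀ i, dist ((latPt d h z) i) ((latPt d h (z + Pi.single j 1)) i) ^ 2
      = if i = j then h ^ 2 else 0 := by
    intro i
    simp only [latPt, Real.dist_eq, sq_abs]
    by_cases hi : i = j
    · subst hi
      simp
      try ring
    · simp [hi]
  simp only [this]
  simp [Real.sqrt_sq hh.le]

lemma aux_edge {p q x y K : ℝ} (hp : 0 < p) (hq : 0 < q) (hK : 0 ≤ K)
    (h1 : p ≤ (1 + K) * q) (h2 : q ≤ (1 + K) * p) :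
    -(K ^ 2 * (q * y ^ 2)) ≤ (p * x - q * y) * (x - y) := by
  have hpq : (p - q) ^ 2 ≤ K ^ 2 * (p * q) := by
    rcases le_total p q with h | h
    · have : (q - p) ^ 2 ≤ (K * p) ^ 2 := by
        apply pow_le_pow_left₀ <;> linarith
      nlinarith [mul_le_mul_of_nonneg_left h hp.le, sq_nonneg K,
        mul_nonneg (sq_nonneg K) (mul_nonneg hp.le (sub_nonneg.2 h))]
    · have : (p - q) ^ 2 ≤ (K * q) ^ 2 := by
        apply pow_le_pow_left₀ <;> linarith
      nlinarith [mul_nonneg (sq_nonneg K) (mul_nonneg hq.le (sub_nonneg.2 h))]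
  have h3 := mul_le_mul_of_nonneg_right hpq (sq_nonneg y)
  have h4 : 0 ≤ p * ((p * x - q * y) * (x - y) + K ^ 2 * (q * y ^ 2)) := by
    nlinarith [sq_nonneg (p * (x - y) + (p - q) * y / 2), mul_nonneg (sq_nonneg (p-q)) (sq_nonneg y)]
  have := nonneg_of_mul_nonneg_right h4 hp
  linarith

lemma aux_sum {G : Type*} [AddCommGroup G] {w x : G → ℝ} {K : ℝ} (hw : ∀ z, 0 < w z) (hK : 0 ≤ K)
    (e : G)
    (h1 : ∀ z, w z ≤ (1 + K) * w (z + e))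
    (h2 : ∀ z, w (z + e) ≤ (1 + K) * w z)
    (hx : (Function.support x).Finite) :
    -(K ^ 2 * ∑' z, w z * x z ^ 2) ≤
      ∑' z, w z * x z * (2 * x z - x (z + e) - x (z - e)) := by
  have S : ∀ g : G → ℝ, Summable fun z => x z * g z := fun g =>
    summable_of_hasFiniteSupport (hx.subset (Function.support_mul_subset_left x g))
  obtain ⟨f, hf⟩ : ∃ g : G → ℝ, ∀ z, g z = w z * x z ^ 2 := ⟨_, fun _ => rfl⟩
  obtain ⟨a, ha⟩ : ∃ g : G → ℝ, ∀ z, g z = w z * x z * (x z - x (z + e)) := ⟨_, fun _ => rfl⟩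
  obtain ⟨b, hb⟩ : ∃ g : G → ℝ, ∀ z, g z = w z * x z * (x z - x (z - e)) := ⟨_, fun _ => rfl⟩
  have Sf : Summable f := (S fun z => w z * x z).congr fun z => by rw [hf]; ring
  have Sa : Summable a := (S fun z => w z * (x z - x (z + e))).congr fun z => by
    rw [ha]; ring
  have Sb : Summable b := (S fun z => w z * (x z - x (z - e))).congr fun z => by
    rw [hb]; ring
  have Sf' : Summable fun z => f (z + e) := (Equiv.addRight e).summable_iff.2 Sf
  have Sb' : Summable fun z => b (z + e) := (Equiv.addRight e).summable_iff.2 Sb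
  have e1 : ∑' z, f (z + e) = ∑' z, f z := (Equiv.addRight e).tsum_eq f
  have e2 : ∑' z, b (z + e) = ∑' z, b z := (Equiv.addRight e).tsum_eq b
  have e3 : ∑' z, w z * x z * (2 * x z - x (z + e) - x (z - e)) = ∑' z, a z + ∑' z, b z := by
    rw [← Sa.tsum_add Sb]
    refine tsum_congr fun z => ?_
    rw [ha, hb]; ring
  rw [e3, ← e2, ← Sa.tsum_add Sb']
  have e4 : ∑' z, w z * x z ^ 2 = ∑' z, f z := tsum_congr fun z => (hf z).symm
  rw [e4, ← e1, ← tsum_mul_left, ← tsum_neg]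
  refine Summable.tsum_le_tsum (fun z => ?_) (Sf'.mul_left _).neg (Sa.add Sb')
  have := aux_edge (x := x z) (y := x (z + e)) (hw z) (hw (z + e)) hK (h1 z) (h2 z)
  rw [hf, ha, hb, add_sub_cancel_right]
  linarith

lemma aux_pt (d : ℕ) (h : ℝ) (V : Euc d → ℝ) (hV1 : ∀ x, 1 ≤ V x) (v : Zd d → ℂ)
    (z : Zd d) :
    (h ^ 2)⁻¹ * ∑ j : Fin d, (2 * ‖v z‖ - ‖v (z + Pi.single j 1)‖ - ‖v (z - Pi.single j 1)‖)
      + V (latPt d h z) * ‖v z‖ ≤ ‖discSchrodinger d h V v z‖ := by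
  have hV := hV1 (latPt d h z)
  have hi : 0 ≤ (h ^ 2)⁻¹ := by positivity
  set A : ℝ := (h ^ 2)⁻¹ * (d * 2) + V (latPt d h z)
  have hA : 0 ≤ A := by positivity
  have e1 : discSchrodinger d h V v z = (A : ℂ) * v z -
      (((h ^ 2)⁻¹ : ℝ) : ℂ) * ∑ j : Fin d, (v (z + Pi.single j 1) + v (z - Pi.single j 1)) := by
    simp only [discSchrodinger, sub_sub, Finset.sum_sub_distrib, A]
    simp
    ring
  have e2 : ‖(((h ^ 2)⁻¹ : ℝ) : ℂ) * ∑ j : Fin d, (v (z + Pi.single j 1) + v (z - Pi.single j 1))‖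
      ≤ (h ^ 2)⁻¹ * ∑ j : Fin d, (‖v (z + Pi.single j 1)‖ + ‖v (z - Pi.single j 1)‖) := by
    rw [norm_mul, Complex.norm_real, Real.norm_of_nonneg hi]
    gcongr
    exact (norm_sum_le _ _).trans (Finset.sum_le_sum fun j _ => norm_add_le _ _)
  have e3 : ‖(A : ℂ) * v z‖ = A * ‖v z‖ := by
    rw [norm_mul, Complex.norm_real, Real.norm_of_nonneg hA]
  have e4 := norm_sub_norm_le ((A : ℂ) * v z) ((((h ^ 2)⁻¹ : ℝ) : ℂ) *
    ∑ j : Fin d, (v (z + Pi.single j 1) + v (z - Pi.single j 1)))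
  rw [← e1, e3] at e4
  refine le_trans ?_ e4
  refine le_trans ?_ (sub_le_sub_left e2 _)
  simp only [sub_sub, Finset.sum_sub_distrib, A]
  simp
  apply le_of_eq
  ring

lemma aux_cs {ι : Type*} (f g : ι → ℝ) (hf : (Function.support f).Finite)
    (hg : Summable fun i => g i ^ 2) :
    ∑' i, f i * g i ≤ Real.sqrt (∑' i, f i ^ 2) * Real.sqrt (∑' i, g i ^ 2) := by
  have h1 : ∑' i, f i * g i = ∑ i ∈ hf.toFinset, f i * g i :=
    tsum_eq_sum fun i hi => by
      have : f i = 0 := by simpa using hi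
      simp [this]
  have h2 : ∑' i, f i ^ 2 = ∑ i ∈ hf.toFinset, f i ^ 2 :=
    tsum_eq_sum fun i hi => by
      have : f i = 0 := by simpa using hi
      simp [this]
  rw [h1, h2]
  refine (Real.sum_mul_le_sqrt_mul_sqrt _ f g).trans ?_
  gcongr
  exact hg.sum_le_tsum _ fun i _ => sq_nonneg _

lemma aux_fin (d : ℕ) (h : ℝ) (V : Euc d → ℝ) (v : Zd d → ℂ)
    (hv : (Function.support v).Finite) :
    (Function.support (discSchrodinger d h V v)).Finite := by
  have h1 : ∀ e : Zd d, (Function.support fun z => v (z + e)).Finite := fun e =>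
    hv.preimage (f := fun z => z + e) (add_left_injective e).injOn
  have h2 : ∀ e : Zd d, (Function.support fun z => v (z - e)).Finite := fun e => by
    simpa [sub_eq_add_neg] using h1 (-e)
  refine (hv.union (Set.finite_iUnion fun j : Fin d =>
    (h1 (Pi.single j 1)).union (h2 (Pi.single j 1)))).subset ?_
  intro z hz
  by_contra hc
  apply hz
  simp only [Set.mem_union, Set.mem_iUnion, Function.mem_support, not_or, not_exists, ne_eq,
    not_not] at hc
  simp [discSchrodinger, hc.1, fun j => (hc.2 j).1, fun j => (hc.2 j).2]

lemma aux_main (d : ℕ) (h : ℝ) (hh : 0 < h) (V : Euc d → ℝ) (hV1 : ∀ x, 1 ≤ V x)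
    (W : Euc d → ℝ) (c L : ℝ) (hc : 1 ≤ c) (hL : 0 ≤ L) (hVW : ∀ x, V x ≤ W x)
    (hWV : ∀ x, W x ≤ c * V x)
    (hW : ∀ x y, dist x y = h → W x ≤ (1 + L * h) * W y)
    (v : Zd d → ℂ) (hv : (Function.support v).Finite) :
    Real.sqrt (∑' z, ‖(V (latPt d h z) : ℂ) * v z‖ ^ 2) ≤
      c * (Real.sqrt (∑' z, ‖discSchrodinger d h V v z‖ ^ 2)
        + d * L ^ 2 * Real.sqrt (∑' z, ‖v z‖ ^ 2)) := by
  let w : Zd d → ℝ := fun z => W (latPt d h z)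
  let u : Zd d → ℝ := fun z => V (latPt d h z)
  let x : Zd d → ℝ := fun z => ‖v z‖
  let F : Zd d → ℝ := fun z => ‖discSchrodinger d h V v z‖
  have hw : ∀ z, 0 < w z := fun z => by have := hVW (latPt d h z); have := hV1 (latPt d h z); simp only [w]; linarith
  have hu : ∀ z, 0 < u z := fun z => by have := hV1 (latPt d h z); simp only [u]; linarith
  have hx : (Function.support x).Finite := hv.subset fun z hz => by
    simpa [x] using hz
  have hF : (Function.support F).Finite := (aux_fin d h V v hv).subset fun z hz => by
    simpa [F] using hz
  have S : ∀ g : Zd d → ℝ, Summable fun z => x z * g z := fun g =>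
    summable_of_hasFiniteSupport (hx.subset (Function.support_mul_subset_left x g))
  have SF : Summable fun z => F z ^ 2 := 
    summable_of_hasFiniteSupport (hF.subset fun z hz => by
      simp only [Function.mem_support] at hz ⊢
      exact fun h0 => hz (by simp [h0]))
  have Sx : Summable fun z => x z ^ 2 := (S x).congr fun z => by ring
  have hwx : (Function.support fun z => w z * x z).Finite :=
    hx.subset (Function.support_mul_subset_right w x)
  have cs1 := aux_cs (fun z => w z * x z) F hwx SF
  have cs2 := aux_cs (fun z => w z * x z) x hwx Sx
  set A := Real.sqrt (∑' z, (w z * x z) ^ 2) with hA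
  set B := Real.sqrt (∑' z, F z ^ 2) with hB
  set D := Real.sqrt (∑' z, x z ^ 2) with hD
  have hA0 : 0 ≤ A := Real.sqrt_nonneg _
  have hA2 : A ^ 2 = ∑' z, (w z * x z) ^ 2 := Real.sq_sqrt (tsum_nonneg fun z => sq_nonneg _)
  let l : Fin d → Zd d → ℝ := fun j z =>
    w z * x z * (2 * x z - x (z + Pi.single j 1) - x (z - Pi.single j 1))
  have Sl : ∀ j, Summable (l j) := fun j =>
    (S fun z => w z * (2 * x z - x (z + Pi.single j 1) - x (z - Pi.single j 1))).congr fun z => by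
      simp only [l]; ring
  have Sq : Summable fun z => w z * x z * (u z * x z) := 
    (S fun z => w z * (u z * x z)).congr fun z => by ring
  have SwF : Summable fun z => w z * x z * F z := 
    (S fun z => w z * F z).congr fun z => by ring
  have Sw2 : Summable fun z => (w z * x z) ^ 2 := 
    (S fun z => w z * (w z * x z)).congr fun z => by ring
  have k1 : (h ^ 2)⁻¹ * ∑ j, ∑' z, l j z + ∑' z, w z * x z * (u z * x z)
      ≤ ∑' z, w z * x z * F z := by
    rw [← Summable.tsum_finsetSum (fun j _ => Sl j), ← tsum_mul_left,
      ← ((summable_sum fun j _ => Sl j).mul_left _).tsum_add Sq]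
    refine Summable.tsum_le_tsum (fun z => ?_)
      (((summable_sum fun j _ => Sl j).mul_left _).add Sq) SwF
    have := mul_le_mul_of_nonneg_left (aux_pt d h V hV1 v z)
      (mul_nonneg (hw z).le (norm_nonneg (v z)))
    refine le_trans (le_of_eq ?_) this
    simp only [l, ← Finset.mul_sum]
    simp only [x, u]
    ring
  have k2 : ∀ j, -((L * h) ^ 2 * ∑' z, w z * x z ^ 2) ≤ ∑' z, l j z := fun j =>
    aux_sum hw (by positivity) (Pi.single j 1)
      (fun z => hW _ _ (aux_dist d h hh z j))
      (fun z => hW _ _ (by rw [dist_comm]; exact aux_dist d h hh z j)) hx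
  have k3 : -(d * L ^ 2 * ∑' z, w z * x z ^ 2) ≤ (h ^ 2)⁻¹ * ∑ j, ∑' z, l j z := by
    have := Finset.sum_le_sum fun j (_ : j ∈ Finset.univ) => k2 j
    rw [Finset.sum_const, Finset.card_univ, Fintype.card_fin, nsmul_eq_mul] at this
    refine le_trans (le_of_eq ?_) (mul_le_mul_of_nonneg_left this (by positivity))
    field_simp
  have k4 : ∑' z, w z * x z ^ 2 = ∑' z, w z * x z * x z := tsum_congr fun z => by ring
  have k5 : A ^ 2 ≤ c * ∑' z, w z * x z * (u z * x z) := by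
    rw [hA2, ← tsum_mul_left]
    refine Summable.tsum_le_tsum (fun z => ?_) Sw2 (Sq.mul_left _)
    have h1 : w z ≤ c * u z := hWV _
    have h2 : 0 ≤ w z * x z ^ 2 := mul_nonneg (hw z).le (sq_nonneg _)
    nlinarith [mul_le_mul_of_nonneg_right h1 h2]
  have k6 : A ^ 2 ≤ c * (B + d * L ^ 2 * D) * A := by
    have : ∑' z, w z * x z * (u z * x z) ≤ A * B + d * L ^ 2 * (A * D) := by
      have := mul_le_mul_of_nonneg_left cs2 (show 0 ≤ d * L ^ 2 by positivity)
      rw [k4] at k3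
      linarith
    have := mul_le_mul_of_nonneg_left this (show 0 ≤ c by linarith)
    linarith
  have k7 : A ≤ c * (B + d * L ^ 2 * D) := by
    rcases hA0.eq_or_lt with h0 | h0
    · rw [← h0]
      have : 0 ≤ B := Real.sqrt_nonneg _
      have : 0 ≤ D := Real.sqrt_nonneg _
      positivity
    · rw [sq] at k6
      exact le_of_mul_le_mul_right k6 h0
  refine le_trans ?_ k7
  apply Real.sqrt_le_sqrt
  have hpt : ∀ z, ‖(V (latPt d h z) : ℂ) * v z‖ = u z * x z := fun z => by
    rw [norm_mul, Complex.norm_real, Real.norm_of_nonneg (hu z).le]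
  simp only [hpt]
  refine Summable.tsum_le_tsum (fun z => ?_) ((S fun z => u z * (u z * x z)).congr fun z => by ring) Sw2
  have : 0 ≤ x z := norm_nonneg _
  have h1 : u z ≤ w z := hVW _
  have := (hu z).le
  gcongr

/-- Let `V : ℝ^d → ℝ` be continuous with `V ≥ 1`, with `V⁻¹` uniformly
continuous and `c₁⁻¹ V(x) ≤ V(y) ≤ c₁ V(x)` whenever `|x−y| ≤ 1`.  Then `V` is `H_h`-bounded
uniformly in the mesh size:  there is `C > 0`, independent of `h ∈ (0,1]`, such that for every
finitely supported `v : hℤ^d → ℂ`, `‖V v‖_h ≤ C (‖H_h v‖_h + ‖v‖_h)`. -/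
theorem potential_relatively_bounded_discrete_uniform
    (d : ℕ) (V : Euc d → ℝ)
    (hVcont : Continuous V) (hV1 : ∀ x, 1 ≤ V x)
    (hVinv : UniformContinuous fun x => (V x)⁻¹)
    (c₁ : ℝ) (hc₁ : 0 < c₁)
    (hVcomp : ∀ x y : Euc d, dist x y ≤ 1 → c₁⁻¹ * V x ≤ V y ∧ V y ≤ c₁ * V x) :
    ∃ C > (0 : ℝ), ∀ h : ℝ, 0 < h → h ≤ 1 →
      ∀ v : Zd d → ℂ, (Function.support v).Finite →
        normh d h (fun z => (V (latPt d h z) : ℂ) * v z) ≤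
          C * (normh d h (discSchrodinger d h V v) + normh d h v) := by
  have hc : 1 ≤ c₁ := by
    have h0 := (hVcomp 0 0 (by simp)).2
    have := hV1 0
    by_contra hlt
    push Not at hlt
    nlinarith
  obtain ⟨W, hVW, hWV, hW⟩ := aux_weight hV1 hc fun x y hxy => (hVcomp x y hxy).2
  set l := Real.log c₁
  have hl : 0 ≤ l := Real.log_nonneg hc
  set L := l * Real.exp l with hLdef
  have hL : 0 ≤ L := by positivity
  refine ⟨c₁ * (1 + d * L ^ 2), by positivity, ?_⟩
  intro h hh hh1 v hv
  have key := aux_main d h hh V hV1 W c₁ L hc hL hVW hWV (fun x y hxy => by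
    refine (hW x y).trans ?_
    have hy : 0 ≤ W y := by have := hVW y; have := hV1 y; linarith
    refine mul_le_mul_of_nonneg_right ?_ hy
    rw [hxy]
    have h1 : Real.exp (l * h) ≤ Real.exp l := Real.exp_le_exp.2 (by nlinarith)
    have h2 := Real.add_one_le_exp (-(l * h))
    have h3 : Real.exp (-(l * h)) * Real.exp (l * h) = 1 := by
      rw [← Real.exp_add]; simp
    have h4 := mul_le_mul_of_nonneg_right h2 (Real.exp_pos (l * h)).le
    have h5 := mul_le_mul_of_nonneg_left h1 (mul_nonneg hl hh.le)
    rw [hLdef]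
    linarith) v hv
  have hd : 0 ≤ h ^ d := by positivity
  simp only [normh, Real.sqrt_mul hd]
  set B := Real.sqrt (∑' z, ‖discSchrodinger d h V v z‖ ^ 2)
  set D := Real.sqrt (∑' z, ‖v z‖ ^ 2)
  have hB : 0 ≤ B := Real.sqrt_nonneg _
  have hD : 0 ≤ D := Real.sqrt_nonneg _
  have hK : 0 ≤ d * L ^ 2 := by positivity
  have key2 : c₁ * (B + d * L ^ 2 * D) ≤ c₁ * (1 + d * L ^ 2) * (B + D) := by
    rw [mul_assoc c₁ (1 + d * L ^ 2)]
    refine mul_le_mul_of_nonneg_left ?_ hc₁.le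
    nlinarith [mul_nonneg hK hB]
  have := mul_le_mul_of_nonneg_left (key.trans key2) (Real.sqrt_nonneg (h ^ d))
  linarith
end
end

section
/- Let A and B be bounded normal operators on a complex Hilbert space. Then the Hausdorff distance between their spectra satisfies d_H(σ(A), σ(B)) ≤ ‖A − B‖. -/
theorem aux_infDist_spectrum
    {H : Type*} [NormedAddCommGroup H] [InnerProductSpace ℂ H] [CompleteSpace H]
    (A B : H →L[ℂ] H) (hB : IsStarNormal B) (x : ℂ) (hx : x ∈ spectrum ℂ A) :
    Metric.infDist x (spectrum ℂ B) ≤ ‖A - B‖ := by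
  by_contra! hlt
  set d := Metric.infDist x (spectrum ℂ B) with hd
  have hd0 : 0 < d := lt_of_le_of_lt (norm_nonneg _) hlt
  have hle : ∀ z ∈ spectrum ℂ B, d ≤ ‖z - x‖ := by
    intro z hz
    have := Metric.infDist_le_dist_of_mem (x := x) hz
    rwa [dist_comm, dist_eq_norm] at this
  have hne : ∀ z ∈ spectrum ℂ B, z - x ≠ 0 := by
    intro z hz h0
    have := hle z hz
    rw [h0, norm_zero] at this
    linarith
  have hc1 : ContinuousOn (fun z : ℂ => z - x) (spectrum ℂ B) := by fun_prop
  have hc : ContinuousOn (fun z : ℂ => (z - x)⁻¹) (spectrum ℂ B) := hc1.inv₀ hne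
  set C := cfc (fun z : ℂ => (z - x)⁻¹) B with hC
  have hCn : ‖C‖ ≤ d⁻¹ := by
    refine norm_cfc_le (by positivity) fun z hz => ?_
    rw [norm_inv]
    exact inv_anti₀ hd0 (hle z hz)
  have hBx : cfc (fun z : ℂ => z - x) B = B - algebraMap ℂ _ x := by
    rw [cfc_sub (fun z : ℂ => z) (fun _ => x) B, cfc_id' ℂ B, cfc_const x B]
  have h1 : (B - algebraMap ℂ _ x) * C = 1 := by
    rw [← hBx, hC, ← cfc_mul _ _ B hc1 hc, ← cfc_one ℂ B]
    exact cfc_congr fun z hz => mul_inv_cancel₀ (hne z hz)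
  have h2 : C * (B - algebraMap ℂ _ x) = 1 := by
    rw [← hBx, hC, ← cfc_mul _ _ B hc hc1, ← cfc_one ℂ B]
    exact cfc_congr fun z hz => inv_mul_cancel₀ (hne z hz)
  have hu : IsUnit (B - algebraMap ℂ (H →L[ℂ] H) x) := ⟨⟨_, C, h1, h2⟩, rfl⟩
  have hn : ‖-(C * (A - B))‖ < 1 := by
    rw [norm_neg]
    calc ‖C * (A - B)‖ ≤ ‖C‖ * ‖A - B‖ := norm_mul_le _ _
      _ ≤ d⁻¹ * ‖A - B‖ := by gcongr
      _ < d⁻¹ * d := by gcongr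
      _ = 1 := inv_mul_cancel₀ hd0.ne'
  have hu2 : IsUnit (1 - -(C * (A - B))) := isUnit_one_sub_of_norm_lt_one hn
  have hu3 := hu.mul hu2
  have he : (B - algebraMap ℂ (H →L[ℂ] H) x) * (1 - -(C * (A - B)))
      = -(algebraMap ℂ (H →L[ℂ] H) x - A) := by
    rw [sub_neg_eq_add, mul_add, mul_one, ← mul_assoc, h1, one_mul]
    abel
  rw [he] at hu3
  exact hx ((IsUnit.neg_iff _).1 hu3)

/-- For bounded normal operators `A`, `B` on a complex Hilbert space,
the Hausdorff distance of their spectra is at most `‖A - B‖`. -/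
theorem hausdorffDist_spectrum_le_norm_sub
    {H : Type*} [NormedAddCommGroup H] [InnerProductSpace ℂ H] [CompleteSpace H]
    (A B : H →L[ℂ] H)
    (hA : A.comp (ContinuousLinearMap.adjoint A) = (ContinuousLinearMap.adjoint A).comp A)
    (hB : B.comp (ContinuousLinearMap.adjoint B) = (ContinuousLinearMap.adjoint B).comp B) :
    Metric.hausdorffDist (spectrum ℂ A) (spectrum ℂ B) ≤ ‖A - B‖ := by
  have nA : IsStarNormal A := ⟨hA.symm⟩
  have nB : IsStarNormal B := ⟨hB.symm⟩
  refine Metric.hausdorffDist_le_of_infDist (norm_nonneg _) ?_ ?_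
  · exact fun x hx => aux_infDist_spectrum A B nB x hx
  · intro x hx
    rw [norm_sub_rev]
    exact aux_infDist_spectrum B A nA x hx
end

section
/- Let V : ℝ^d → ℝ be continuous with V ≥ 1 and suppose there is c₁ > 0 with c₁⁻¹ V(x) ≤ V(y) ≤ c₁ V(x) whenever |x−y| ≤ 1. Let η ∈ C_c^∞(ℝ^d) with η ≥ 0, supp η ⊂ {|x| ≤ 1} and ∫ η(x) dx = 1, and set Ṽ = η * V (convolution). Then Ṽ is smooth, c₁⁻¹ V(x) ≤ Ṽ(x) ≤ c₁ V(x) for all x ∈ ℝ^d (in particular Ṽ ≥ 1), and for every multi-index α ∈ ℤ_+^d there is C_α > 0 such that |∂_x^α Ṽ(x)| ≤ C_α Ṽ(x) for all x ∈ ℝ^d. -/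
open MeasureTheory

lemma spp_supp {d : ℕ} {F : Type} [NormedAddCommGroup F]
    {g : EuclideanSpace ℝ (Fin d) → F} (hg : tsupport g ⊆ Metric.closedBall 0 1)
    (x y : EuclideanSpace ℝ (Fin d)) (h : g (x - y) ≠ 0) : dist x y ≤ 1 := by
  have := hg (subset_tsupport g h)
  rwa [mem_closedBall_zero_iff, ← dist_eq_norm] at this

lemma spp_bound {d : ℕ} (V : EuclideanSpace ℝ (Fin d) → ℝ)
    (hVcont : Continuous V) (hV1 : ∀ x, 1 ≤ V x) (c₁ : ℝ)
    (hVcomp : ∀ x y : EuclideanSpace ℝ (Fin d), dist x y ≤ 1 → V y ≤ c₁ * V x) (n : ℕ) :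
    ∀ (F : Type) [NormedAddCommGroup F] [NormedSpace ℝ F] [CompleteSpace F]
      (g : EuclideanSpace ℝ (Fin d) → F) (_ : ContDiff ℝ (⊤ : ℕ∞) g)
      (_ : tsupport g ⊆ Metric.closedBall 0 1),
      ∃ C : ℝ, ∀ x, ‖iteratedFDeriv ℝ n (fun x' => ∫ y, V y • g (x' - y)) x‖ ≤ C * V x := by
  induction n with
  | zero =>
    intro F _ _ _ g hg hs
    have hcs : HasCompactSupport g :=
      (isCompact_closedBall _ _).of_isClosed_subset (isClosed_tsupport g) hs
    have hi : Integrable g := hg.continuous.integrable_of_hasCompactSupport hcs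
    refine ⟨c₁ * ∫ z, ‖g z‖, fun x => ?_⟩
    rw [norm_iteratedFDeriv_zero]
    have h1 : ∀ y, ‖V y • g (x - y)‖ ≤ (c₁ * V x) * ‖g (x - y)‖ := by
      intro y
      rw [norm_smul, Real.norm_of_nonneg (by linarith [hV1 y])]
      by_cases h : g (x - y) = 0
      · simp [h]
      · exact mul_le_mul_of_nonneg_right (hVcomp x y (spp_supp hs x y h)) (norm_nonneg _)
    calc ‖∫ y, V y • g (x - y)‖ ≤ ∫ y, (c₁ * V x) * ‖g (x - y)‖ :=
          norm_integral_le_of_norm_le ((hi.comp_sub_left x).norm.const_mul _)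
            (Filter.Eventually.of_forall h1)
      _ = c₁ * (∫ z, ‖g z‖) * V x := by
          rw [integral_const_mul, integral_sub_left_eq_self (fun z => ‖g z‖) volume x]
          ring
  | succ n ih =>
    intro F _ _ _ g hg hs
    have hcs : HasCompactSupport g :=
      (isCompact_closedBall _ _).of_isClosed_subset (isClosed_tsupport g) hs
    have hg' : ContDiff ℝ (⊤ : ℕ∞) (fderiv ℝ g) := hg.fderiv_right (by simp)
    obtain ⟨C, hC⟩ := ih _ (fderiv ℝ g) hg' ((tsupport_fderiv_subset ℝ).trans hs)
    refine ⟨C, fun x => ?_⟩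
    have hf : fderiv ℝ (fun x' => ∫ y, V y • g (x' - y)) =
        fun x' => ∫ y, V y • fderiv ℝ g (x' - y) := by
      funext x'
      have := hcs.hasFDerivAt_convolution_right (ContinuousLinearMap.lsmul ℝ ℝ)
        (hVcont.locallyIntegrable (μ := volume)) (hg.of_le (by norm_cast)) x'
      exact this.fderiv
    rw [← norm_iteratedFDeriv_fderiv, hf]
    exact hC x

/-- Let `V : ℝ^d → ℝ` be continuous with `V ≥ 1`, comparable at scale `1`
(`c₁⁻¹ V(x) ≤ V(y) ≤ c₁ V(x)` for `|x−y| ≤ 1`).  Let `η` be a smooth nonnegative bump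
supported in the unit ball with `∫ η = 1`, and let `Ṽ = η * V`.  Then `Ṽ` is smooth,
`c₁⁻¹ V ≤ Ṽ ≤ c₁ V` (in particular `Ṽ ≥ 1`), and every derivative of `Ṽ` of order `n`
is bounded by `C_n Ṽ`. -/
theorem smoothed_potential_properties
    (d : ℕ) (V : EuclideanSpace ℝ (Fin d) → ℝ)
    (hVcont : Continuous V) (hV1 : ∀ x, 1 ≤ V x)
    (c₁ : ℝ) (hc₁ : 0 < c₁)
    (hVcomp : ∀ x y : EuclideanSpace ℝ (Fin d), dist x y ≤ 1 →
      c₁⁻¹ * V x ≤ V y ∧ V y ≤ c₁ * V x)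
    (η : EuclideanSpace ℝ (Fin d) → ℝ)
    (hηsmooth : ContDiff ℝ (⊤ : ℕ∞) η) (hηsupp : HasCompactSupport η)
    (hη0 : ∀ x, 0 ≤ η x) (hηball : tsupport η ⊆ Metric.closedBall 0 1)
    (hηint : ∫ x, η x = 1) :
    ContDiff ℝ (⊤ : ℕ∞) (fun x => ∫ y, η (x - y) * V y) ∧
    (∀ x, c₁⁻¹ * V x ≤ (∫ y, η (x - y) * V y) ∧ (∫ y, η (x - y) * V y) ≤ c₁ * V x) ∧
    (∀ x, (1 : ℝ) ≤ ∫ y, η (x - y) * V y) ∧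
    (∀ n : ℕ, ∃ C > (0 : ℝ), ∀ x,
      ‖iteratedFDeriv ℝ n (fun x' => ∫ y, η (x' - y) * V y) x‖ ≤
        C * ∫ y, η (x - y) * V y) := by
  have hi : ∀ x, Integrable (fun y => η (x - y) * V y) := by
    intro x
    refine Continuous.integrable_of_hasCompactSupport ?_ ?_
    · exact (hηsmooth.continuous.comp (continuous_const.sub continuous_id)).mul hVcont
    · exact HasCompactSupport.mul_right
        (hηsupp.comp_homeomorph (Homeomorph.subLeft x))
  have hη : Integrable η := hηsmooth.continuous.integrable_of_hasCompactSupport hηsupp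
  have hc : ∀ (a : ℝ) x, ∫ y, η (x - y) * a = a := by
    intro a x
    rw [integral_mul_const, integral_sub_left_eq_self η volume x, hηint, one_mul]
  have hci : ∀ (a : ℝ) x, Integrable (fun y => η (x - y) * a) :=
    fun a x => (hη.comp_sub_left x).mul_const a
  have hlow : ∀ (a : ℝ) x, (∀ y, dist x y ≤ 1 → a ≤ V y) → a ≤ ∫ y, η (x - y) * V y := by
    intro a x h
    conv_lhs => rw [← hc a x]
    refine integral_mono (hci a x) (hi x) fun y => ?_
    by_cases h0 : η (x - y) = 0
    · simp [h0]
    · exact mul_le_mul_of_nonneg_left (h y (spp_supp hηball x y h0)) (hη0 _)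
  have hup : ∀ (a : ℝ) x, (∀ y, dist x y ≤ 1 → V y ≤ a) → ∫ y, η (x - y) * V y ≤ a := by
    intro a x h
    conv_rhs => rw [← hc a x]
    refine integral_mono (hi x) (hci a x) fun y => ?_
    by_cases h0 : η (x - y) = 0
    · simp [h0]
    · exact mul_le_mul_of_nonneg_left (h y (spp_supp hηball x y h0)) (hη0 _)
  have h2 : ∀ x, c₁⁻¹ * V x ≤ ∫ y, η (x - y) * V y :=
    fun x => hlow _ x fun y hy => (hVcomp x y hy).1
  have heq : (fun x => ∫ y, η (x - y) * V y) = fun x => ∫ y, V y • η (x - y) := by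
    funext x
    simp only [smul_eq_mul, mul_comm]
  refine ⟨?_, fun x => ⟨h2 x, hup _ x fun y hy => (hVcomp x y hy).2⟩,
    fun x => hlow _ x fun y _ => hV1 y, fun n => ?_⟩
  · rw [heq]
    exact hηsupp.contDiff_convolution_right (ContinuousLinearMap.lsmul ℝ ℝ)
      (hVcont.locallyIntegrable (μ := volume)) hηsmooth
  · obtain ⟨C, hC⟩ := spp_bound V hVcont hV1 c₁ (fun x y h => (hVcomp x y h).2) n ℝ η
      hηsmooth hηball
    refine ⟨(|C| + 1) * c₁, by positivity, fun x => ?_⟩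
    have h3 := hC x
    rw [← heq] at h3
    have h4 : V x ≤ c₁ * ∫ y, η (x - y) * V y := by
      have := mul_le_mul_of_nonneg_left (h2 x) hc₁.le
      rwa [mul_inv_cancel_left₀ hc₁.ne'] at this
    calc _ ≤ C * V x := h3
      _ ≤ (|C| + 1) * V x :=
        mul_le_mul_of_nonneg_right (by linarith [le_abs_self C]) (by linarith [hV1 x])
      _ ≤ (|C| + 1) * (c₁ * ∫ y, η (x - y) * V y) :=
        mul_le_mul_of_nonneg_left h4 (by positivity)
      _ = _ := by ring
end
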